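/- ∫₀^∞ [I₀(t)]²[K₀(t)]⁴·t·(2 − 85t² + 72t⁴) dt = 0. -/

import Mathlib

open Real MeasureTheory Set

/-- Modified Bessel function `I₀(t) = (1/π)∫₀^π exp(t cos θ) dθ`. -/
noncomputable def I0 (t : ℝ) : ℝ := (1 / π) * ∫ θ in (0:ℝ)..π, exp (t * cos θ)

/-- Modified Bessel function `K₀(t) = ∫₀^∞ exp(−t cosh u) du`. -/
noncomputable def K0 (t : ℝ) : ℝ := ∫ u in Ioi (0:ℝ), exp (-(t * Real.cosh u))

/-- Rising factorial `(a)ₙ = a(a+1)⋯(a+n−1)`. -/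
noncomputable def ris (a : ℝ) (n : ℕ) : ℝ := ∏ k ∈ Finset.range n, (a + k)

/-- Generalized hypergeometric series `ₚF_q(a; b | x)`. -/
noncomputable def pFq (a b : List ℝ) (x : ℝ) : ℝ :=
  ∑' n : ℕ, ((a.map fun p => ris p n).prod / (b.map fun q => ris q n).prod) * x ^ n
    / (n.factorial : ℝ)

open Filter Topology Asymptotics ProbabilityTheory Polynomial

/-!
Let `θ = t d/dt`. Both `I₀` and `K₀` solve `θ² u = t² u`. For six solutions `u i`, let `e j` be the
coefficient of `X ^ j` in `∏ i, (u i + θ (u i) X)`; then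
`θ (e j) = (j + 1) e (j + 1) + (7 - j) t² e (j - 1)`. Hence one can look for polynomials `p j` in
`t` such that the derivative of `G = ∑ j, p j * e j` involves only `e 0 = ∏ i, u i`, and a solution
has `G' = t (2 - 85 t² + 72 t⁴) e 0`. For two copies of `I₀` and four of `K₀`, every `e j` is
`O(t ^ (-ε))` at `0` and `O(t⁶ exp (-2 t))` at `∞`. Every `p j` except the constant `p 6` is
divisible by `t²`, and `e 6 = (θ I₀)² (θ K₀)⁴` vanishes at `0` because `θ I₀ = O(t)`; so `G`
vanishes at both ends.
-/

/-! ### Real powers and improper integrals -/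

lemma rpow_mul_exp_neg_le {s y : ℝ} (hs : 0 < s) (hy : 0 ≤ y) : y ^ s * exp (-y) ≤ s ^ s := by
  have hroot : y ≤ s * exp (y / s) := by
    have := (lt_add_one (y / s)).le.trans (add_one_le_exp (y / s))
    rwa [div_le_iff₀' hs] at this
  calc y ^ s * exp (-y) ≤ (s * exp (y / s)) ^ s * exp (-y) := by gcongr
    _ = s ^ s * (exp y * exp (-y)) := by
      rw [mul_rpow hs.le (exp_pos _).le, ← exp_mul, div_mul_cancel₀ _ hs.ne', mul_assoc]
    _ = s ^ s := by rw [← exp_add, add_neg_cancel, exp_zero, mul_one]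

lemma rpow_neg_div_natCast_pow {n : ℕ} {t : ℝ} (ht : 0 ≤ t) (hn : n ≠ 0) (δ : ℝ) :
    (t ^ (-(δ / n))) ^ n = t ^ (-δ) := by
  rw [← rpow_mul_natCast ht, neg_mul, div_mul_cancel₀ δ (Nat.cast_ne_zero.2 hn)]

lemma tendsto_pow_mul_rpow_neg_nhdsGT_zero {k : ℕ} {δ : ℝ} (hδ : δ < k) :
    Tendsto (fun t : ℝ => t ^ k * t ^ (-δ)) (𝓝[>] 0) (𝓝 0) := by
  have hexponent : 0 < k - δ := sub_pos.2 hδ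
  have hlim := (continuousAt_rpow_const 0 (k - δ) (Or.inr hexponent.le)).tendsto
  rw [zero_rpow hexponent.ne'] at hlim
  refine (hlim.mono_left nhdsWithin_le_nhds).congr' ?_
  filter_upwards [self_mem_nhdsWithin] with t (ht : 0 < t)
  rw [sub_eq_add_neg, rpow_add ht, rpow_natCast]

lemma integral_Ioi_of_hasDerivAt_of_tendsto_nhdsGT {f f' : ℝ → ℝ} {c m n : ℝ}
    (hderiv : ∀ t ∈ Ioi c, HasDerivAt f (f' t) t) (hint : IntegrableOn f' (Ioi c))
    (hc : Tendsto f (𝓝[>] c) (𝓝 m)) (htop : Tendsto f atTop (𝓝 n)) :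
    ∫ t in Ioi c, f' t = n - m := by
  simpa using integral_Ioi_deriv_mul_eq_sub (v := 1) (v' := 0) hderiv
    (fun t _ => hasDerivAt_const t 1) (by simpa using hint) (by simpa using hc)
    (by simpa using htop)

/-! ### Mixed elementary symmetric functions -/

section MixedEsymm

variable {ι R : Type*} [CommSemiring R]

/-- The sum over all `j`-element subsets `S` of `s` of `∏_{i ∈ S} v i * ∏_{i ∈ s \ S} u i`, encoded
as a coefficient of the generating polynomial. -/
noncomputable def mixedEsymm (s : Finset ι) (u v : ι → R) (j : ℕ) : R :=
  (∏ i ∈ s, (C (u i) + X * C (v i))).coeff j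

lemma mixedEsymm_cons_zero {i : ι} {s : Finset ι} (hi : i ∉ s) (u v : ι → R) :
    mixedEsymm (s.cons i hi) u v 0 = u i * mixedEsymm s u v 0 := by
  simp [mixedEsymm, mul_coeff_zero]

lemma mixedEsymm_cons_succ {i : ι} {s : Finset ι} (hi : i ∉ s) (u v : ι → R) (j : ℕ) :
    mixedEsymm (s.cons i hi) u v (j + 1)
      = u i * mixedEsymm s u v (j + 1) + v i * mixedEsymm s u v j := by
  simp [mixedEsymm, add_mul, mul_assoc, coeff_X_mul]

lemma mixedEsymm_zero (s : Finset ι) (u v : ι → R) : mixedEsymm s u v 0 = ∏ i ∈ s, u i := by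
  simp [mixedEsymm, coeff_zero_prod]

lemma mixedEsymm_of_card_lt {s : Finset ι} {j : ℕ} (hj : s.card < j) (u v : ι → R) :
    mixedEsymm s u v j = 0 := by
  induction s using Finset.cons_induction generalizing j with
  | empty =>
    have hj0 : j ≠ 0 := (Nat.zero_le _).trans_lt hj |>.ne'
    simp [mixedEsymm, coeff_one, hj0]
  | cons i s hi ih =>
    rw [Finset.card_cons] at hj
    obtain ⟨j, rfl⟩ := Nat.exists_eq_succ_of_ne_zero (Nat.ne_zero_of_lt hj)
    rw [Nat.succ_eq_add_one, mixedEsymm_cons_succ, ih (by lia), ih (by lia)]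
    simp

lemma mixedEsymm_card (s : Finset ι) (u v : ι → R) :
    mixedEsymm s u v s.card = ∏ i ∈ s, v i := by
  induction s using Finset.cons_induction with
  | empty => simp [mixedEsymm]
  | cons i s hi ih =>
    rw [Finset.card_cons, mixedEsymm_cons_succ, mixedEsymm_of_card_lt (Nat.lt_succ_self _), ih,
      Finset.prod_cons]
    simp

end MixedEsymm

section MixedEsymmDeriv

variable {ι : Type*} {s : Finset ι} {u v : ι → ℝ → ℝ} {a b t : ℝ}

lemma hasDerivAt_mixedEsymm_zero (hu : ∀ i ∈ s, HasDerivAt (u i) (a * v i t) t) :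
    HasDerivAt (fun x => mixedEsymm s (u · x) (v · x) 0)
      (a * mixedEsymm s (u · t) (v · t) 1) t := by
  induction s using Finset.cons_induction with
  | empty => simpa [mixedEsymm, coeff_one] using hasDerivAt_const t (1 : ℝ)
  | cons i s hi ih =>
    rw [Finset.forall_mem_cons] at hu
    simp only [mixedEsymm_cons_zero, mixedEsymm_cons_succ]
    exact (hu.1.mul (ih hu.2)).congr_deriv (by ring)

lemma hasDerivAt_mixedEsymm_succ (hu : ∀ i ∈ s, HasDerivAt (u i) (a * v i t) t)
    (hv : ∀ i ∈ s, HasDerivAt (v i) (b * u i t) t) (j : ℕ) :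
    HasDerivAt (fun x => mixedEsymm s (u · x) (v · x) (j + 1))
      (a * (j + 2) * mixedEsymm s (u · t) (v · t) (j + 2)
        + b * (s.card - j) * mixedEsymm s (u · t) (v · t) j) t := by
  induction s using Finset.cons_induction generalizing j with
  | empty => cases j <;> simpa [mixedEsymm, coeff_one] using hasDerivAt_const t (0 : ℝ)
  | cons i s hi ih =>
    rw [Finset.forall_mem_cons] at hu hv
    simp only [mixedEsymm_cons_succ, Finset.card_cons]
    cases j with
    | zero =>
      simp only [mixedEsymm_cons_zero]
      exact ((hu.1.mul (ih hu.2 hv.2 0)).add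
        (hv.1.mul (hasDerivAt_mixedEsymm_zero hu.2))).congr_deriv (by push_cast; ring)
    | succ j =>
      simp only [mixedEsymm_cons_succ]
      exact ((hu.1.mul (ih hu.2 hv.2 (j + 1))).add
        (hv.1.mul (ih hu.2 hv.2 j))).congr_deriv (by push_cast; ring)

end MixedEsymmDeriv

lemma isBigO_mixedEsymm {ι α : Type*} {s : Finset ι} {l : Filter α} {u v g : ι → α → ℝ}
    (hu : ∀ i ∈ s, u i =O[l] g i) (hv : ∀ i ∈ s, v i =O[l] g i) (j : ℕ) :
    (fun x => mixedEsymm s (u · x) (v · x) j) =O[l] fun x => ∏ i ∈ s, g i x := by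
  induction s using Finset.cons_induction generalizing j with
  | empty => simpa [mixedEsymm] using isBigO_const_const ((1 : ℝ[X]).coeff j) (one_ne_zero' ℝ) l
  | cons i s hi ih =>
    rw [Finset.forall_mem_cons] at hu hv
    simp only [Finset.prod_cons]
    cases j with
    | zero =>
      simp only [mixedEsymm_cons_zero]
      exact hu.1.mul (ih hu.2 hv.2 0)
    | succ j =>
      simp only [mixedEsymm_cons_succ]
      exact (hu.1.mul (ih hu.2 hv.2 (j + 1))).add (hv.1.mul (ih hu.2 hv.2 j))

/-! ### A primitive for products of six solutions -/

/-- A combination of `e 0, …, e 6` with polynomial coefficients in `t`, chosen so that only `e 0`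
survives in its derivative when `e j` is the `j`-th mixed elementary symmetric function of six
solutions of the modified Bessel equation and their images under `θ = t d/dt`. -/
noncomputable def sixfoldPrimitive (e : ℕ → ℝ) (t : ℝ) : ℝ :=
  ((15 * t ^ 6 - 41 * t ^ 4 + 2 * t ^ 2) * e 0 + (9 * t ^ 4 - t ^ 2) * e 1
    - (3 * t ^ 4 - t ^ 2) * e 2 - 3 / 2 * t ^ 2 * e 3 + 3 * t ^ 2 * e 4 - 15 * e 6) / 2

lemma hasDerivAt_sixfoldPrimitive {ι : Type*} {s : Finset ι} {u v : ι → ℝ → ℝ} {t : ℝ}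
    (hs : s.card = 6) (ht : t ≠ 0) (hu : ∀ i ∈ s, HasDerivAt (u i) (t⁻¹ * v i t) t)
    (hv : ∀ i ∈ s, HasDerivAt (v i) (t * u i t) t) :
    HasDerivAt (fun x => sixfoldPrimitive (mixedEsymm s (u · x) (v · x)) x)
      ((∏ i ∈ s, u i t) * t * (2 - 85 * t ^ 2 + 72 * t ^ 4)) t := by
  have hsucc := hasDerivAt_mixedEsymm_succ hu hv
  have hpow := fun n : ℕ => hasDerivAt_pow n t
  have hterm0 := ((((hpow 6).const_mul 15).sub ((hpow 4).const_mul 41)).add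
    ((hpow 2).const_mul 2)).mul (hasDerivAt_mixedEsymm_zero hu)
  have hterm1 := (((hpow 4).const_mul 9).sub (hpow 2)).mul (hsucc 0)
  have hterm2 := (((hpow 4).const_mul 3).sub (hpow 2)).mul (hsucc 1)
  have hterm3 := ((hpow 2).const_mul (3 / 2)).mul (hsucc 2)
  have hterm4 := ((hpow 2).const_mul 3).mul (hsucc 3)
  have hterm6 := (hsucc 5).const_mul 15
  have hseven : mixedEsymm s (u · t) (v · t) 7 = 0 := mixedEsymm_of_card_lt (by lia) _ _
  refine (((((hterm0.add hterm1).sub hterm2).sub hterm3).add hterm4).sub hterm6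
    |>.div_const 2).congr_deriv ?_
  rw [← mixedEsymm_zero s (u · t) (v · t)]
  simp only [hs, hseven, Nat.cast_ofNat, Nat.reduceAdd, Nat.reduceSub, zero_add, Nat.cast_zero,
    Nat.cast_one, Pi.add_apply, Pi.sub_apply]
  field_simp
  ring

lemma tendsto_sixfoldPrimitive {e : ℕ → ℝ → ℝ} {l : Filter ℝ} (h6 : Tendsto (e 6) l (𝓝 0))
    (h : ∀ j k : ℕ, 2 ≤ k → Tendsto (fun t => t ^ k * e j t) l (𝓝 0)) :
    Tendsto (fun t => sixfoldPrimitive (e · t) t) l (𝓝 0) := by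
  have hterm0 := (((h 0 6 (by norm_num)).const_mul 15).sub
    ((h 0 4 (by norm_num)).const_mul 41)).add ((h 0 2 le_rfl).const_mul 2)
  have hterm1 := ((h 1 4 (by norm_num)).const_mul 9).sub (h 1 2 le_rfl)
  have hterm2 := ((h 2 4 (by norm_num)).const_mul 3).sub (h 2 2 le_rfl)
  have hterm3 := (h 3 2 le_rfl).const_mul (3 / 2)
  have hterm4 := (h 4 2 le_rfl).const_mul 3
  have hsum := ((((hterm0.add hterm1).sub hterm2).sub hterm3).add hterm4).sub
    (h6.const_mul 15) |>.div_const 2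
  convert hsum using 2
  · unfold sixfoldPrimitive
    ring
  · norm_num

/-! ### The function `I₀` -/

/-- `(1/π) ∫₀^π cosⁿ θ exp (t cos θ) dθ`, the `n`-th derivative of `I₀`. -/
noncomputable def cosExpMoment (n : ℕ) (t : ℝ) : ℝ :=
  (1 / π) * ∫ θ in (0 : ℝ)..π, cos θ ^ n * exp (t * cos θ)

lemma cosExpMoment_zero : cosExpMoment 0 = I0 := by
  funext t
  simp [I0, cosExpMoment]

lemma integrableExpSet_cos : integrableExpSet cos (volume.restrict (Ioc 0 π)) = Set.univ := by
  refine eq_univ_of_forall fun t => ?_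
  have hcont : Continuous fun θ => exp (t * cos θ) := by fun_prop
  exact (hcont.integrableOn_Icc (a := 0) (b := π)).mono_set Ioc_subset_Icc_self

lemma hasDerivAt_cosExpMoment (n : ℕ) (t : ℝ) :
    HasDerivAt (cosExpMoment n) (cosExpMoment (n + 1) t) t := by
  have hmoment := hasDerivAt_integral_pow_mul_exp_real (X := cos)
    (μ := volume.restrict (Ioc 0 π)) (t := t) (by simp [integrableExpSet_cos]) n
  unfold cosExpMoment
  simpa only [intervalIntegral.integral_of_le pi_pos.le] using hmoment.const_mul (1 / π)

lemma cosExpMoment_one_eq (t : ℝ) :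
    cosExpMoment 1 t = t * cosExpMoment 0 t - t * cosExpMoment 2 t := by
  have hint (n : ℕ) : IntervalIntegrable (fun θ => cos θ ^ n * exp (t * cos θ)) volume 0 π :=
    (by fun_prop : Continuous fun θ => cos θ ^ n * exp (t * cos θ)).intervalIntegrable _ _
  have hderiv (θ : ℝ) : HasDerivAt (fun θ => sin θ * exp (t * cos θ))
      (cos θ ^ 1 * exp (t * cos θ)
        - (t * (cos θ ^ 0 * exp (t * cos θ)) - t * (cos θ ^ 2 * exp (t * cos θ)))) θ := by
    refine ((hasDerivAt_sin θ).mul ((hasDerivAt_cos θ).const_mul t).exp).congr_deriv ?_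
    rw [cos_sq']
    ring
  have hdiff := ((hint 0).const_mul t).sub ((hint 2).const_mul t)
  have hparts :=
    intervalIntegral.integral_eq_sub_of_hasDerivAt (fun θ _ => hderiv θ) ((hint 1).sub hdiff)
  rw [intervalIntegral.integral_sub (hint 1) hdiff,
    intervalIntegral.integral_sub ((hint 0).const_mul t) ((hint 2).const_mul t),
    intervalIntegral.integral_const_mul, intervalIntegral.integral_const_mul,
    sin_zero, sin_pi, zero_mul, zero_mul, sub_zero] at hparts
  unfold cosExpMoment
  linear_combination (1 / π) * hparts

lemma abs_cosExpMoment_le (n : ℕ) (t : ℝ) : |cosExpMoment n t| ≤ exp |t| := by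
  have hintegrand (θ : ℝ) : ‖cos θ ^ n * exp (t * cos θ)‖ ≤ exp |t| := by
    have hexponent : t * cos θ ≤ |t| := by
      calc t * cos θ ≤ |t * cos θ| := le_abs_self _
        _ = |t| * |cos θ| := abs_mul _ _
        _ ≤ |t| := mul_le_of_le_one_right (abs_nonneg t) (abs_cos_le_one θ)
    calc ‖cos θ ^ n * exp (t * cos θ)‖ = |cos θ| ^ n * exp (t * cos θ) := by simp
      _ ≤ 1 * exp |t| := by
        gcongr
        exact pow_le_one₀ (abs_nonneg _) (abs_cos_le_one θ)
      _ = exp |t| := one_mul _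
  have hbound := intervalIntegral.norm_integral_le_of_norm_le_const (a := 0) (b := π)
    fun θ _ => hintegrand θ
  rw [sub_zero, abs_of_pos pi_pos, norm_eq_abs] at hbound
  rw [cosExpMoment, abs_mul, abs_of_pos (by positivity : 0 < 1 / π), one_div_mul_eq_div]
  exact div_le_of_le_mul₀ pi_pos.le (exp_pos _).le hbound

/-- `θ I₀ = t I₀'`, where `θ = t d/dt`. -/
noncomputable def thetaI0 (t : ℝ) : ℝ := t * cosExpMoment 1 t

lemma hasDerivAt_I0 {t : ℝ} (ht : t ≠ 0) : HasDerivAt I0 (t⁻¹ * thetaI0 t) t := by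
  rw [← cosExpMoment_zero, thetaI0, inv_mul_cancel_left₀ ht]
  exact hasDerivAt_cosExpMoment 0 t

lemma hasDerivAt_thetaI0 (t : ℝ) : HasDerivAt thetaI0 (t * I0 t) t := by
  refine ((hasDerivAt_id' t).mul (hasDerivAt_cosExpMoment 1 t)).congr_deriv ?_
  rw [← cosExpMoment_zero]
  linear_combination cosExpMoment_one_eq t

lemma isBigO_cosExpMoment_atTop (n : ℕ) : cosExpMoment n =O[atTop] exp := by
  refine IsBigO.of_bound 1 ?_
  filter_upwards [eventually_ge_atTop 0] with t ht
  simpa [abs_of_nonneg ht] using abs_cosExpMoment_le n t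

lemma isBigO_I0_nhdsGT_zero : I0 =O[𝓝[>] 0] fun _ => (1 : ℝ) := by
  rw [← cosExpMoment_zero]
  exact ((hasDerivAt_cosExpMoment 0 0).continuousAt.tendsto.isBigO_one ℝ).mono nhdsWithin_le_nhds

lemma isBigO_thetaI0_nhdsGT_zero : thetaI0 =O[𝓝[>] 0] fun t => t := by
  have hone : cosExpMoment 1 =O[𝓝[>] 0] fun _ => (1 : ℝ) :=
    ((hasDerivAt_cosExpMoment 1 0).continuousAt.tendsto.isBigO_one ℝ).mono nhdsWithin_le_nhds
  exact ((isBigO_refl (fun t : ℝ => t) _).mul hone).congr_right mul_one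

/-! ### The function `K₀` -/

/-- `∫₀^∞ coshⁿ u exp (-t cosh u) du`, which is `(-1)ⁿ` times the `n`-th derivative of `K₀`. -/
noncomputable def coshExpMoment (n : ℕ) (t : ℝ) : ℝ :=
  ∫ u in Ioi (0 : ℝ), cosh u ^ n * exp (-(t * cosh u))

lemma coshExpMoment_zero : coshExpMoment 0 = K0 := by
  funext t
  simp [K0, coshExpMoment]

lemma cosh_rpow_neg_le {ε : ℝ} (hε : 0 ≤ ε) (u : ℝ) :
    cosh u ^ (-ε) ≤ 2 ^ ε * exp (-ε * u) := by
  have hexp : exp u / 2 ≤ cosh u := by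
    rw [cosh_eq]
    linarith [exp_pos (-u)]
  calc cosh u ^ (-ε) ≤ (exp u / 2) ^ (-ε) :=
        rpow_le_rpow_of_nonpos (by positivity) hexp (neg_nonpos.2 hε)
    _ = 2 ^ ε * exp (-ε * u) := by
      rw [div_rpow (exp_pos u).le zero_le_two, ← exp_mul, rpow_neg zero_le_two, div_inv_eq_mul,
        mul_comm u, mul_comm]

lemma cosh_pow_mul_exp_neg_le (n : ℕ) {ε t : ℝ} (hε : 0 < ε) (ht : 0 < t) (u : ℝ) :
    cosh u ^ n * exp (-(t * cosh u))
      ≤ (n + ε) ^ (n + ε) * 2 ^ ε * t ^ (-(n + ε)) * exp (-ε * u) := by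
  have hcosh := cosh_pos u
  have hsplit : cosh u ^ n = (t * cosh u) ^ (n + ε) * (t ^ (-(n + ε)) * cosh u ^ (-ε)) := by
    rw [mul_rpow ht.le hcosh.le, mul_mul_mul_comm, ← rpow_add ht, ← rpow_add hcosh, add_neg_cancel,
      rpow_zero, one_mul, add_neg_cancel_right, rpow_natCast]
  calc cosh u ^ n * exp (-(t * cosh u))
      = (t * cosh u) ^ (n + ε) * exp (-(t * cosh u)) * (t ^ (-(n + ε)) * cosh u ^ (-ε)) := by
        rw [hsplit]
        ring
    _ ≤ (n + ε) ^ (n + ε) * (t ^ (-(n + ε)) * (2 ^ ε * exp (-ε * u))) := by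
        gcongr
        · exact rpow_mul_exp_neg_le (by positivity) (by positivity)
        · exact cosh_rpow_neg_le hε.le u
    _ = _ := by ring

lemma integrableOn_cosh_pow_mul_exp_neg (n : ℕ) {t : ℝ} (ht : 0 < t) :
    IntegrableOn (fun u => cosh u ^ n * exp (-(t * cosh u))) (Ioi 0) := by
  have hcont : Continuous fun u => cosh u ^ n * exp (-(t * cosh u)) := by fun_prop
  refine Integrable.mono' ((integrableOn_exp_mul_Ioi neg_one_lt_zero 0).const_mul _)
    hcont.aestronglyMeasurable (Eventually.of_forall fun u =>
      (norm_of_nonneg ?_).trans_le (cosh_pow_mul_exp_neg_le n one_pos ht u))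
  exact mul_nonneg (pow_nonneg (cosh_pos u).le n) (exp_pos _).le

lemma tendsto_sinh_mul_exp_neg_atTop {t : ℝ} (ht : 0 < t) :
    Tendsto (fun u => sinh u * exp (-(t * cosh u))) atTop (𝓝 0) := by
  have hlim : Tendsto (fun u : ℝ => exp (-1 * u)) atTop (𝓝 0) := by
    simpa using tendsto_exp_neg_atTop_nhds_zero
  have hbound := hlim.const_mul (((1 : ℕ) + 1 : ℝ) ^ ((1 : ℕ) + 1 : ℝ) * 2 ^ (1 : ℝ)
    * t ^ (-((1 : ℕ) + 1 : ℝ)))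
  rw [mul_zero] at hbound
  refine squeeze_zero' ?_ (Eventually.of_forall fun u => ?_) hbound
  · filter_upwards [eventually_ge_atTop 0] with u hu
    exact mul_nonneg (sinh_nonneg_iff.2 hu) (exp_pos _).le
  · calc sinh u * exp (-(t * cosh u)) ≤ cosh u ^ 1 * exp (-(t * cosh u)) := by
          rw [pow_one]
          gcongr
          exact (sinh_lt_cosh u).le
      _ ≤ _ := cosh_pow_mul_exp_neg_le 1 one_pos ht u

lemma hasDerivAt_coshExpMoment (n : ℕ) {t : ℝ} (ht : 0 < t) :
    HasDerivAt (coshExpMoment n) (-coshExpMoment (n + 1) t) t := by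
  have hsubset : Iio 0 ⊆ integrableExpSet cosh (volume.restrict (Ioi 0)) := fun x hx => by
    simpa [integrableExpSet, IntegrableOn]
      using integrableOn_cosh_pow_mul_exp_neg 0 (neg_pos.2 hx)
  have hmem : -t ∈ interior (integrableExpSet cosh (volume.restrict (Ioi 0))) :=
    interior_maximal hsubset isOpen_Iio (neg_lt_zero.2 ht)
  unfold coshExpMoment
  simpa [Function.comp_def] using
    (hasDerivAt_integral_pow_mul_exp_real hmem n).comp t (hasDerivAt_neg t)

lemma coshExpMoment_one_eq {t : ℝ} (ht : 0 < t) :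
    coshExpMoment 1 t = t * coshExpMoment 2 t - t * coshExpMoment 0 t := by
  have hint (n : ℕ) := integrableOn_cosh_pow_mul_exp_neg n ht
  have hderiv (u : ℝ) : HasDerivAt (fun u => sinh u * exp (-(t * cosh u)))
      (cosh u ^ 1 * exp (-(t * cosh u)) - (t * (cosh u ^ 2 * exp (-(t * cosh u)))
        - t * (cosh u ^ 0 * exp (-(t * cosh u))))) u := by
    refine ((hasDerivAt_sinh u).mul ((hasDerivAt_cosh u).const_mul t).fun_neg.exp).congr_deriv ?_
    rw [cosh_sq u]
    ring
  have hdiff : IntegrableOn (fun u => t * (cosh u ^ 2 * exp (-(t * cosh u)))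
      - t * (cosh u ^ 0 * exp (-(t * cosh u)))) (Ioi 0) :=
    ((hint 2).const_mul t).sub ((hint 0).const_mul t)
  have hparts := integral_Ioi_of_hasDerivAt_of_tendsto' (fun u _ => hderiv u)
    ((hint 1).sub hdiff) (tendsto_sinh_mul_exp_neg_atTop ht)
  rw [integral_sub (hint 1) hdiff, integral_sub ((hint 2).const_mul t) ((hint 0).const_mul t),
    integral_const_mul, integral_const_mul, sinh_zero, zero_mul, sub_zero] at hparts
  exact sub_eq_zero.1 hparts

lemma coshExpMoment_nonneg (n : ℕ) (t : ℝ) : 0 ≤ coshExpMoment n t :=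
  integral_nonneg fun u => by positivity [cosh_pos u]

lemma isBigO_coshExpMoment_nhdsGT_zero (n : ℕ) {ε : ℝ} (hε : 0 < ε) :
    coshExpMoment n =O[𝓝[>] 0] fun t => t ^ (-(n + ε)) := by
  refine IsBigO.of_bound ((n + ε) ^ (n + ε) * 2 ^ ε * ∫ u in Ioi (0 : ℝ), exp (-ε * u)) ?_
  filter_upwards [self_mem_nhdsWithin] with t (ht : 0 < t)
  rw [norm_of_nonneg (coshExpMoment_nonneg n t), norm_of_nonneg (by positivity),
    mul_right_comm, ← integral_const_mul]
  exact setIntegral_mono_on (integrableOn_cosh_pow_mul_exp_neg n ht)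
    ((integrableOn_exp_mul_Ioi (neg_neg_of_pos hε) 0).const_mul _) measurableSet_Ioi
    fun u _ => cosh_pow_mul_exp_neg_le n hε ht u

lemma antitoneOn_exp_mul_coshExpMoment (n : ℕ) :
    AntitoneOn (fun t => exp t * coshExpMoment n t) (Ioi 0) := by
  intro s hs t ht hst
  simp only [coshExpMoment, ← integral_const_mul]
  refine setIntegral_mono_on ((integrableOn_cosh_pow_mul_exp_neg n ht).const_mul _)
    ((integrableOn_cosh_pow_mul_exp_neg n hs).const_mul _) measurableSet_Ioi fun u _ => ?_
  rw [mul_left_comm, mul_left_comm (exp s), ← exp_add, ← exp_add]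
  have hexponent : t + -(t * cosh u) ≤ s + -(s * cosh u) := by nlinarith [one_le_cosh u]
  gcongr

lemma isBigO_coshExpMoment_atTop (n : ℕ) :
    coshExpMoment n =O[atTop] fun t => exp (-t) := by
  refine IsBigO.of_bound (exp 1 * coshExpMoment n 1) ?_
  filter_upwards [eventually_ge_atTop 1] with t ht
  have hanti := antitoneOn_exp_mul_coshExpMoment n (mem_Ioi.2 one_pos) (one_pos.trans_le ht) ht
  rw [norm_of_nonneg (coshExpMoment_nonneg n t), norm_of_nonneg (exp_pos _).le, exp_neg,
    ← div_eq_mul_inv, le_div_iff₀' (exp_pos t)]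
  exact hanti

/-- `θ K₀ = t K₀'`, where `θ = t d/dt`. -/
noncomputable def thetaK0 (t : ℝ) : ℝ := -(t * coshExpMoment 1 t)

lemma hasDerivAt_K0 {t : ℝ} (ht : 0 < t) : HasDerivAt K0 (t⁻¹ * thetaK0 t) t := by
  rw [← coshExpMoment_zero, thetaK0, mul_neg, inv_mul_cancel_left₀ ht.ne']
  exact hasDerivAt_coshExpMoment 0 ht

lemma hasDerivAt_thetaK0 {t : ℝ} (ht : 0 < t) : HasDerivAt thetaK0 (t * K0 t) t := by
  refine ((hasDerivAt_id' t).mul (hasDerivAt_coshExpMoment 1 ht)).neg.congr_deriv ?_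
  rw [← coshExpMoment_zero]
  linear_combination -coshExpMoment_one_eq ht

lemma isBigO_K0_nhdsGT_zero {ε : ℝ} (hε : 0 < ε) : K0 =O[𝓝[>] 0] fun t => t ^ (-ε) := by
  simpa [coshExpMoment_zero] using isBigO_coshExpMoment_nhdsGT_zero 0 hε

lemma isBigO_thetaK0_nhdsGT_zero {ε : ℝ} (hε : 0 < ε) :
    thetaK0 =O[𝓝[>] 0] fun t => t ^ (-ε) := by
  refine ((isBigO_refl (fun t : ℝ => t) _).mul
    (isBigO_coshExpMoment_nhdsGT_zero 1 hε)).neg_left.congr' .rfl ?_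
  filter_upwards [self_mem_nhdsWithin] with t (ht : 0 < t)
  rw [← rpow_one_add' ht.le] <;> norm_num [hε.ne']

/-! ### Products of `I₀` and `K₀` -/

section IKM

/-- `a` copies of `I₀` followed by `b` copies of `K₀`. -/
noncomputable def ikmFamily (a b : ℕ) : Fin a ⊕ Fin b → ℝ → ℝ :=
  Sum.elim (fun _ => I0) fun _ => K0

/-- `θ = t d/dt` applied to each member of `ikmFamily a b`. -/
noncomputable def thetaIkmFamily (a b : ℕ) : Fin a ⊕ Fin b → ℝ → ℝ :=
  Sum.elim (fun _ => thetaI0) fun _ => thetaK0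

/-- The mixed elementary symmetric functions of `ikmFamily a b` and its `θ`-derivatives; the
`0`-th one is `I₀ᵃ K₀ᵇ`. -/
noncomputable def ikmEsymm (a b j : ℕ) (t : ℝ) : ℝ :=
  mixedEsymm Finset.univ (ikmFamily a b · t) (thetaIkmFamily a b · t) j

variable {a b : ℕ}

lemma ikmEsymm_zero (t : ℝ) : ikmEsymm a b 0 t = I0 t ^ a * K0 t ^ b := by
  simp [ikmEsymm, ikmFamily, mixedEsymm_zero, Fintype.prod_sum_type]

lemma ikmEsymm_add (t : ℝ) : ikmEsymm a b (a + b) t = thetaI0 t ^ a * thetaK0 t ^ b := by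
  have hcard := mixedEsymm_card Finset.univ (ikmFamily a b · t) (thetaIkmFamily a b · t)
  simpa [ikmEsymm, thetaIkmFamily, Fintype.prod_sum_type] using hcard

lemma hasDerivAt_ikmFamily {t : ℝ} (ht : 0 < t) (i : Fin a ⊕ Fin b) :
    HasDerivAt (ikmFamily a b i) (t⁻¹ * thetaIkmFamily a b i t) t := by
  rcases i with _ | _
  exacts [hasDerivAt_I0 ht.ne', hasDerivAt_K0 ht]

lemma hasDerivAt_thetaIkmFamily {t : ℝ} (ht : 0 < t) (i : Fin a ⊕ Fin b) :
    HasDerivAt (thetaIkmFamily a b i) (t * ikmFamily a b i t) t := by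
  rcases i with _ | _
  exacts [hasDerivAt_thetaI0 t, hasDerivAt_thetaK0 ht]

lemma isBigO_ikmEsymm {l : Filter ℝ} {g h : ℝ → ℝ} (hI : I0 =O[l] g) (hθI : thetaI0 =O[l] g)
    (hK : K0 =O[l] h) (hθK : thetaK0 =O[l] h) (j : ℕ) :
    ikmEsymm a b j =O[l] fun t => g t ^ a * h t ^ b := by
  have hprod := isBigO_mixedEsymm (s := Finset.univ) (u := ikmFamily a b)
    (v := thetaIkmFamily a b) (g := Sum.elim (fun _ => g) fun _ => h) (l := l)
    (by rintro (_ | _) -; exacts [hI, hK]) (by rintro (_ | _) -; exacts [hθI, hθK]) j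
  exact hprod.congr_right fun t => by simp [Fintype.prod_sum_type]

lemma isBigO_ikmEsymm_nhdsGT_zero (hb : b ≠ 0) {δ : ℝ} (hδ : 0 < δ) (j : ℕ) :
    ikmEsymm a b j =O[𝓝[>] 0] fun t => t ^ (-δ) := by
  have hθI : thetaI0 =O[𝓝[>] 0] fun _ => (1 : ℝ) :=
    ((hasDerivAt_thetaI0 0).continuousAt.tendsto.isBigO_one ℝ).mono nhdsWithin_le_nhds
  have hε : 0 < δ / b := by positivity
  refine (isBigO_ikmEsymm isBigO_I0_nhdsGT_zero hθI (isBigO_K0_nhdsGT_zero hε)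
    (isBigO_thetaK0_nhdsGT_zero hε) j).congr' .rfl ?_
  filter_upwards [self_mem_nhdsWithin] with t (ht : 0 < t)
  rw [one_pow, one_mul, rpow_neg_div_natCast_pow ht.le hb]

lemma isBigO_ikmEsymm_atTop (j : ℕ) :
    ikmEsymm a b j =O[atTop] fun t => t ^ (a + b) * exp (-((b - a) * t)) := by
  have hle {f : ℝ → ℝ} : f =O[atTop] fun t => t * f t := by
    refine IsBigO.of_bound 1 ?_
    filter_upwards [eventually_ge_atTop 1] with t ht
    rw [norm_mul, one_mul]
    exact le_mul_of_one_le_left (norm_nonneg _) (ht.trans (le_norm_self t))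
  have hid := isBigO_refl (fun t : ℝ => t) atTop
  refine (isBigO_ikmEsymm ((cosExpMoment_zero ▸ isBigO_cosExpMoment_atTop 0).trans hle)
    (hid.mul (isBigO_cosExpMoment_atTop 1))
    ((coshExpMoment_zero ▸ isBigO_coshExpMoment_atTop 0).trans hle)
    (hid.mul (isBigO_coshExpMoment_atTop 1)).neg_left j).congr_right fun t => ?_
  rw [mul_pow, mul_pow, mul_mul_mul_comm, ← pow_add, ← exp_nat_mul, ← exp_nat_mul, ← exp_add]
  ring_nf

lemma tendsto_pow_mul_ikmEsymm_nhdsGT_zero (hb : b ≠ 0) (j : ℕ) {k : ℕ} (hk : 1 ≤ k) :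
    Tendsto (fun t => t ^ k * ikmEsymm a b j t) (𝓝[>] 0) (𝓝 0) :=
  ((isBigO_refl (fun t : ℝ => t ^ k) _).mul
    (isBigO_ikmEsymm_nhdsGT_zero hb one_half_pos j)).trans_tendsto
    (tendsto_pow_mul_rpow_neg_nhdsGT_zero (one_half_lt_one.trans_le (Nat.one_le_cast.2 hk)))

lemma tendsto_ikmEsymm_add_nhdsGT_zero (ha : 1 ≤ a) (hb : b ≠ 0) :
    Tendsto (ikmEsymm a b (a + b)) (𝓝[>] 0) (𝓝 0) := by
  have hε : (0 : ℝ) < 1 / 2 / b := by positivity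
  refine (((isBigO_thetaI0_nhdsGT_zero.pow a).mul
    ((isBigO_thetaK0_nhdsGT_zero hε).pow b)).congr' ?_ ?_).trans_tendsto
    (tendsto_pow_mul_rpow_neg_nhdsGT_zero (one_half_lt_one.trans_le (Nat.one_le_cast.2 ha)))
  · exact Eventually.of_forall fun t => (ikmEsymm_add t).symm
  · filter_upwards [self_mem_nhdsWithin] with t (ht : 0 < t)
    rw [rpow_neg_div_natCast_pow ht.le hb]

lemma tendsto_pow_mul_ikmEsymm_atTop (hab : a < b) (j k : ℕ) :
    Tendsto (fun t => t ^ k * ikmEsymm a b j t) atTop (𝓝 0) := by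
  have hrate : (0 : ℝ) < b - a := sub_pos.2 (Nat.cast_lt.2 hab)
  refine ((isBigO_refl (fun t : ℝ => t ^ k) _).mul (isBigO_ikmEsymm_atTop j)).trans_tendsto ?_
  refine (tendsto_rpow_mul_exp_neg_mul_atTop_nhds_zero (k + (a + b) : ℕ) _ hrate).congr fun t => ?_
  rw [rpow_natCast, pow_add, mul_assoc, neg_mul]

lemma integrableOn_pow_mul_I0_pow_mul_K0_pow (hab : a < b) (k : ℕ) :
    IntegrableOn (fun t => t ^ k * (I0 t ^ a * K0 t ^ b)) (Ioi 0) := by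
  have hcont : ContinuousOn (ikmEsymm a b 0) (Ioi 0) := fun t ht =>
    (hasDerivAt_mixedEsymm_zero fun i _ =>
      hasDerivAt_ikmFamily ht i).continuousAt.continuousWithinAt
  have htop : ikmEsymm a b 0 =O[atTop] (· ^ (-(k + 2 : ℕ) : ℝ)) := by
    have hdecay := (tendsto_pow_mul_ikmEsymm_atTop hab 0 (k + 2)).isBigO_one ℝ
    refine ((isBigO_refl (fun t : ℝ => t ^ (-(k + 2 : ℕ) : ℝ)) _).mul hdecay).congr' ?_ ?_
    · filter_upwards [eventually_gt_atTop 0] with t ht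
      rw [rpow_neg ht.le, rpow_natCast, inv_mul_cancel_left₀ (by positivity)]
    · exact Eventually.of_forall fun t => mul_one _
  have hmellin := mellin_convergent_of_isBigO_scalar (s := k + 1)
    (hcont.locallyIntegrableOn measurableSet_Ioi) htop (by push_cast; linarith)
    (isBigO_ikmEsymm_nhdsGT_zero (Nat.ne_zero_of_lt hab) one_half_pos 0) (by linarith)
  simpa [ikmEsymm_zero] using hmellin

theorem sum_rule_IKM24_general (h6 : a + b = 6) (ha : 1 ≤ a) (hab : a < b) :
    ∫ t in Ioi (0 : ℝ), I0 t ^ a * K0 t ^ b * t * (2 - 85 * t ^ 2 + 72 * t ^ 4) = 0 := by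
  have hb : b ≠ 0 := Nat.ne_zero_of_lt hab
  have hderiv (t : ℝ) (ht : 0 < t) :
      HasDerivAt (fun t => sixfoldPrimitive (ikmEsymm a b · t) t)
        (I0 t ^ a * K0 t ^ b * t * (2 - 85 * t ^ 2 + 72 * t ^ 4)) t := by
    rw [← ikmEsymm_zero, ikmEsymm, mixedEsymm_zero]
    exact hasDerivAt_sixfoldPrimitive (by simpa using h6) ht.ne'
      (fun i _ => hasDerivAt_ikmFamily ht i) fun i _ => hasDerivAt_thetaIkmFamily ht i
  have hint : IntegrableOn
      (fun t => I0 t ^ a * K0 t ^ b * t * (2 - 85 * t ^ 2 + 72 * t ^ 4)) (Ioi 0) := by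
    have hmoment := integrableOn_pow_mul_I0_pow_mul_K0_pow hab
    refine ((((hmoment 1).const_mul 2).sub ((hmoment 3).const_mul 85)).add
      ((hmoment 5).const_mul 72)).congr (Eventually.of_forall fun t => ?_)
    simp only [Pi.add_apply, Pi.sub_apply]
    ring
  have hzero : Tendsto (fun t => sixfoldPrimitive (ikmEsymm a b · t) t) (𝓝[>] 0) (𝓝 0) :=
    tendsto_sixfoldPrimitive (h6 ▸ tendsto_ikmEsymm_add_nhdsGT_zero ha hb)
      fun j k hk => tendsto_pow_mul_ikmEsymm_nhdsGT_zero hb j (by lia)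
  have htop : Tendsto (fun t => sixfoldPrimitive (ikmEsymm a b · t) t) atTop (𝓝 0) :=
    tendsto_sixfoldPrimitive (by simpa using tendsto_pow_mul_ikmEsymm_atTop hab 6 0)
      fun j k _ => tendsto_pow_mul_ikmEsymm_atTop hab j k
  rw [integral_Ioi_of_hasDerivAt_of_tendsto_nhdsGT hderiv hint hzero htop, sub_zero]

end IKM

theorem sum_rule_IKM24 :
    (∫ t in Ioi (0:ℝ), (I0 t)^2 * (K0 t)^4 * t * (2 - 85*t^2 + 72*t^4)) = 0 :=
  sum_rule_IKM24_general rfl one_le_two (by norm_num)
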